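/- Let M_fro(B) denote the set of d₁×d₂ real matrices with Frobenius norm at most B, and let d = max{d₁, d₂}. Then for all ε > 0, the covering number of M_fro(B) in spectral (operator) norm satisfies log N_{op}(ε, M_fro(B)) ≤ ⌊36 d B² log(9d)/ε²⌋. -/

import Mathlib

open scoped BigOperators

/-- Frobenius norm of a matrix: the ℓ₂ norm of its entries. -/
noncomputable def frobNorm {m n : ℕ} (M : Matrix (Fin m) (Fin n) ℝ) : ℝ :=
  Real.sqrt (∑ i, ∑ j, M i j ^ 2)

/-- Spectral (ℓ₂-operator) norm: `sup {‖Mx‖₂ : ‖x‖₂ ≤ 1}`. -/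
noncomputable def specNorm {m n : ℕ} (M : Matrix (Fin m) (Fin n) ℝ) : ℝ :=
  sSup {r : ℝ | ∃ x : Fin n → ℝ, Real.sqrt (∑ j, x j ^ 2) ≤ 1 ∧
    r = Real.sqrt (∑ i, M.mulVec x i ^ 2)}

open scoped InnerProductSpace

section SpectralNorm

variable {m n : ℕ}

lemma specNorm_le_of_norm_le (M : Matrix (Fin m) (Fin n) ℝ) {c : ℝ} (hc : 0 ≤ c)
    (h : ∀ x, ‖Matrix.toEuclideanLin M x‖ ≤ c * ‖x‖) : specNorm M ≤ c := by
  refine csSup_le ⟨_, 0, by simp, rfl⟩ ?_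
  rintro _ ⟨x, hx, rfl⟩
  have hMx := h (WithLp.toLp 2 x)
  simp only [EuclideanSpace.norm_eq, Real.norm_eq_abs, sq_abs] at hMx
  exact hMx.trans (mul_le_of_le_one_right hc hx)

lemma norm_sq_toEuclideanLin (M : Matrix (Fin m) (Fin n) ℝ) (x : EuclideanSpace ℝ (Fin n)) :
    ‖Matrix.toEuclideanLin M x‖ ^ 2 = ∑ i, ⟪x, WithLp.toLp 2 (M i)⟫_ℝ ^ 2 := by
  rw [EuclideanSpace.real_norm_sq_eq]
  refine Finset.sum_congr rfl fun i _ => ?_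
  simp [Matrix.toLpLin_apply, Matrix.mulVec, dotProduct, PiLp.inner_apply]

lemma frobNorm_sq (M : Matrix (Fin m) (Fin n) ℝ) :
    frobNorm M ^ 2 = ∑ i, ‖(WithLp.toLp 2 (M i) : EuclideanSpace ℝ (Fin n))‖ ^ 2 := by
  rw [frobNorm, Real.sq_sqrt (by positivity)]
  simp [EuclideanSpace.real_norm_sq_eq]

lemma frobNorm_nonneg (M : Matrix (Fin m) (Fin n) ℝ) : 0 ≤ frobNorm M := Real.sqrt_nonneg _

lemma norm_toEuclideanLin_le_frobNorm (M : Matrix (Fin m) (Fin n) ℝ)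
    (x : EuclideanSpace ℝ (Fin n)) : ‖Matrix.toEuclideanLin M x‖ ≤ frobNorm M * ‖x‖ := by
  refine le_of_sq_le_sq ?_ (mul_nonneg (frobNorm_nonneg M) (norm_nonneg x))
  rw [mul_pow, norm_sq_toEuclideanLin, frobNorm_sq, Finset.sum_mul]
  refine Finset.sum_le_sum fun i _ => ?_
  rw [← sq_abs, ← mul_pow, mul_comm]
  gcongr
  exact abs_real_inner_le_norm _ _

lemma sum_norm_sq_toEuclideanLin_le (M : Matrix (Fin m) (Fin n) ℝ) {k : ℕ}
    {v : Fin k → EuclideanSpace ℝ (Fin n)} (hv : Orthonormal ℝ v) :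
    ∑ c, ‖Matrix.toEuclideanLin M (v c)‖ ^ 2 ≤ frobNorm M ^ 2 := by
  simp_rw [norm_sq_toEuclideanLin, frobNorm_sq]
  rw [Finset.sum_comm]
  refine Finset.sum_le_sum fun i _ => ?_
  simpa using hv.sum_inner_products_le (WithLp.toLp 2 (M i)) (s := Finset.univ)

end SpectralNorm

section LowRank

variable {E F : Type*} [NormedAddCommGroup E] [InnerProductSpace ℝ E]
  [NormedAddCommGroup F] [InnerProductSpace ℝ F]

lemma Orthonormal.card_le_finrank [FiniteDimensional ℝ E] {k : ℕ} {v : Fin k → E}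
    (hv : Orthonormal ℝ v) : k ≤ Module.finrank ℝ E := by
  simpa using hv.linearIndependent.fintype_card_le_finrank

/-- A maximal orthonormal family on which `f` stretches by more than `δ`: on its orthogonal
complement `f` has norm at most `δ`. -/
lemma exists_orthonormal_lt_norm [FiniteDimensional ℝ E] (f : E →ₗ[ℝ] F) (δ : ℝ) :
    ∃ (k : ℕ) (v : Fin k → E), Orthonormal ℝ v ∧ (∀ c, δ < ‖f (v c)‖) ∧
      ∀ x, (∀ c, ⟪v c, x⟫_ℝ = 0) → ‖f x‖ ≤ δ * ‖x‖ := by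
  classical
  let P : ℕ → Prop := fun k => ∃ v : Fin k → E, Orthonormal ℝ v ∧ ∀ c, δ < ‖f (v c)‖
  have h0 : P 0 := ⟨Fin.elim0, ⟨fun c => c.elim0, fun c => c.elim0⟩, fun c => c.elim0⟩
  obtain ⟨v, hv, hfv⟩ : P (Nat.findGreatest P (Module.finrank ℝ E)) :=
    Nat.findGreatest_spec (Nat.zero_le _) h0
  refine ⟨_, v, hv, hfv, fun x hx => ?_⟩
  by_contra! hlt
  have hx0 : x ≠ 0 := by
    rintro rfl
    simp at hlt
  have hxpos : 0 < ‖x‖ := norm_pos_iff.mpr hx0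
  have hP : P (Nat.findGreatest P (Module.finrank ℝ E) + 1) := by
    refine ⟨Matrix.vecCons (‖x‖⁻¹ • x) v, orthonormal_vecCons_iff.mpr ⟨?_, fun c => ?_, hv⟩,
      fun c => ?_⟩
    · simp [norm_smul, hxpos.ne']
    · rw [real_inner_smul_left, real_inner_comm, hx c, mul_zero]
    · refine Fin.cases ?_ (fun c => ?_) c
      · simpa [norm_smul, lt_inv_mul_iff₀ hxpos, mul_comm] using hlt
      · simpa using hfv c
  obtain ⟨w, hw, -⟩ := id hP
  exact absurd (Nat.le_findGreatest hw.card_le_finrank hP) (by simp)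

lemma norm_sum_smul_le {ι : Type*} (s : Finset ι) (a : ι → ℝ) (w : ι → F) {A W : ℝ}
    (hA : 0 ≤ A) (hW : 0 ≤ W) (ha : ∑ c ∈ s, a c ^ 2 ≤ A ^ 2) (hw : ∑ c ∈ s, ‖w c‖ ^ 2 ≤ W ^ 2) :
    ‖∑ c ∈ s, a c • w c‖ ≤ A * W := by
  calc ‖∑ c ∈ s, a c • w c‖ ≤ ∑ c ∈ s, |a c| * ‖w c‖ := by
        simpa [norm_smul] using norm_sum_le s fun c => a c • w c
    _ ≤ A * W := by
        refine le_of_sq_le_sq ?_ (mul_nonneg hA hW)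
        calc (∑ c ∈ s, |a c| * ‖w c‖) ^ 2 ≤ (∑ c ∈ s, |a c| ^ 2) * ∑ c ∈ s, ‖w c‖ ^ 2 :=
              Finset.sum_mul_sq_le_sq_mul_sq _ _ _
          _ ≤ (A * W) ^ 2 := by
              rw [mul_pow]
              simp only [sq_abs]
              gcongr

/-- `f` agrees, up to operator-norm error `δ`, with the map factoring through an orthonormal
family padded by zeros to length `K`. -/
lemma exists_lowRank_approx [FiniteDimensional ℝ E] (f : E →ₗ[ℝ] F) {δ b : ℝ} (hδ : 0 < δ)
    (hb : ∀ (k : ℕ) (v : Fin k → E), Orthonormal ℝ v → ∑ c, ‖f (v c)‖ ^ 2 ≤ b ^ 2)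
    {K : ℕ} (hK : min (Module.finrank ℝ E) ⌊b ^ 2 / δ ^ 2⌋₊ ≤ K) :
    ∃ v : Fin K → E, (∀ c, ‖v c‖ ≤ 1) ∧ (∑ c, ‖f (v c)‖ ^ 2 ≤ b ^ 2) ∧
      (∀ x, ∑ c, ⟪v c, x⟫_ℝ ^ 2 ≤ ‖x‖ ^ 2) ∧
      ∀ x, ‖f x - ∑ c, ⟪v c, x⟫_ℝ • f (v c)‖ ≤ δ * ‖x‖ := by
  obtain ⟨k, v, hv, hfv, hres⟩ := exists_orthonormal_lt_norm f δ
  have hkK : k ≤ K := by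
    refine le_trans (le_min hv.card_le_finrank (Nat.le_floor ?_)) hK
    rw [le_div_iff₀ (by positivity)]
    calc (k : ℝ) * δ ^ 2 = ∑ _c : Fin k, δ ^ 2 := by simp
      _ ≤ ∑ c, ‖f (v c)‖ ^ 2 := by
          gcongr with c
          exact (hfv c).le
      _ ≤ b ^ 2 := hb k v hv
  obtain ⟨l, rfl⟩ := Nat.exists_eq_add_of_le hkK
  refine ⟨Fin.append v 0, fun c => ?_, ?_, fun x => ?_, fun x => ?_⟩
  · refine Fin.addCases (fun c => ?_) (fun c => ?_) c
    · simp [hv.1 c]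
    · simp
  · simpa [Fin.sum_univ_add] using hb k v hv
  · simpa [Fin.sum_univ_add] using hv.sum_inner_products_le x (s := Finset.univ)
  · have horth : ∀ c, ⟪v c, x - ∑ e, ⟪v e, x⟫_ℝ • v e⟫_ℝ = 0 := fun c => by
      rw [inner_sub_right, hv.inner_right_fintype, sub_self]
    have hnorm : ‖x - ∑ e, ⟪v e, x⟫_ℝ • v e‖ ≤ ‖x‖ := by
      have hsum : ⟪∑ e, ⟪v e, x⟫_ℝ • v e, x - ∑ e, ⟪v e, x⟫_ℝ • v e⟫_ℝ = 0 := by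
        rw [sum_inner]
        exact Finset.sum_eq_zero fun c _ => by rw [real_inner_smul_left, horth c, mul_zero]
      have hpyth := norm_add_sq_eq_norm_sq_add_norm_sq_of_inner_eq_zero _ _ hsum
      rw [add_sub_cancel] at hpyth
      nlinarith [norm_nonneg x, norm_nonneg (x - ∑ e, ⟪v e, x⟫_ℝ • v e),
        norm_nonneg (∑ e, ⟪v e, x⟫_ℝ • v e)]
    calc ‖f x - ∑ c, ⟪(Fin.append v 0 : Fin (k + l) → E) c, x⟫_ℝ •
            f ((Fin.append v 0 : Fin (k + l) → E) c)‖
        = ‖f (x - ∑ e, ⟪v e, x⟫_ℝ • v e)‖ := by simp [Fin.sum_univ_add]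
      _ ≤ δ * ‖x - ∑ e, ⟪v e, x⟫_ℝ • v e‖ := hres _ horth
      _ ≤ δ * ‖x‖ := by gcongr

/-- Perturbing both factors of a low-rank map. -/
lemma norm_sum_inner_smul_sub_le {ι : Type*} [Fintype ι] {v v' : ι → E} {u u' : ι → F}
    {b η θ : ℝ} (hb : 0 ≤ b) (hη : 0 ≤ η) (hθ : 0 ≤ θ)
    (hv : ∀ x, ∑ c, ⟪v c, x⟫_ℝ ^ 2 ≤ ‖x‖ ^ 2) (hu' : ∑ c, ‖u' c‖ ^ 2 ≤ b ^ 2)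
    (huu' : ∑ c, ‖u c - u' c‖ ^ 2 ≤ η ^ 2) (hvv' : ∑ c, ‖v c - v' c‖ ^ 2 ≤ θ ^ 2) (x : E) :
    ‖∑ c, ⟪v c, x⟫_ℝ • u c - ∑ c, ⟪v' c, x⟫_ℝ • u' c‖ ≤ (η + θ * b) * ‖x‖ := by
  have hsplit : ∑ c, ⟪v c, x⟫_ℝ • u c - ∑ c, ⟪v' c, x⟫_ℝ • u' c =
      ∑ c, ⟪v c, x⟫_ℝ • (u c - u' c) + ∑ c, ⟪v c - v' c, x⟫_ℝ • u' c := by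
    rw [← Finset.sum_sub_distrib, ← Finset.sum_add_distrib]
    refine Finset.sum_congr rfl fun c _ => ?_
    rw [inner_sub_left, smul_sub, sub_smul]
    abel
  have hθx : ∑ c, ⟪v c - v' c, x⟫_ℝ ^ 2 ≤ (θ * ‖x‖) ^ 2 := by
    calc ∑ c, ⟪v c - v' c, x⟫_ℝ ^ 2 ≤ ∑ c, ‖v c - v' c‖ ^ 2 * ‖x‖ ^ 2 := by
          refine Finset.sum_le_sum fun c _ => ?_
          rw [← sq_abs, ← mul_pow]
          gcongr
          exact abs_real_inner_le_norm _ _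
      _ ≤ (θ * ‖x‖) ^ 2 := by
          rw [← Finset.sum_mul, mul_pow]
          gcongr
  rw [hsplit]
  calc _ ≤ ‖x‖ * η + θ * ‖x‖ * b := (norm_add_le _ _).trans <| add_le_add
        (norm_sum_smul_le _ _ _ (norm_nonneg x) hη (hv x) huu')
        (norm_sum_smul_le _ _ _ (by positivity) hb hθx hu')
    _ = (η + θ * b) * ‖x‖ := by ring

end LowRank

section Grid

/-- Rounding toward zero on the grid `s ℤ`. -/
lemma exists_int_round {s a : ℝ} {L : ℕ} (hs : 0 < s) (ha : ⌊|a| / s⌋₊ ≤ L) :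
    ∃ z ∈ Finset.Icc (-L : ℤ) L, |a - s * z| ≤ s ∧ |s * z| ≤ |a| := by
  have hle : s * ⌊|a| / s⌋₊ ≤ |a| := by
    have := Nat.floor_le (div_nonneg (abs_nonneg a) hs.le)
    rwa [le_div_iff₀ hs, mul_comm] at this
  have hlt : |a| ≤ s * ⌊|a| / s⌋₊ + s := by
    have := Nat.lt_floor_add_one (|a| / s)
    rw [div_lt_iff₀ hs] at this
    linarith
  have hpos : 0 ≤ s * (⌊|a| / s⌋₊ : ℝ) := by positivity
  rcases le_total 0 a with h | h
  · refine ⟨⌊|a| / s⌋₊, Finset.mem_Icc.mpr ⟨by omega, by omega⟩, ?_⟩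
    push_cast
    rw [abs_of_nonneg hpos]
    rw [abs_of_nonneg h] at *
    exact ⟨abs_le.mpr ⟨by linarith, by linarith⟩, hle⟩
  · refine ⟨-⌊|a| / s⌋₊, Finset.mem_Icc.mpr ⟨by omega, by omega⟩, ?_⟩
    push_cast
    rw [mul_neg, abs_neg, abs_of_nonneg hpos]
    rw [abs_of_nonpos h] at *
    exact ⟨abs_le.mpr ⟨by linarith, by linarith⟩, hle⟩

/-- The family of vectors of `s ℤⁿ` with the given integer coordinates. -/
noncomputable def gridFamily {n K L : ℕ} (s : ℝ)
    (g : Fin K → Fin n → Finset.Icc (-L : ℤ) L) (c : Fin K) : EuclideanSpace ℝ (Fin n) :=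
  WithLp.toLp 2 fun i => s * ((g c i : ℤ) : ℝ)

lemma exists_gridFamily {n K L : ℕ} {s R : ℝ} (hs : 0 < s) (hRL : ⌊R / s⌋₊ ≤ L)
    (u : Fin K → EuclideanSpace ℝ (Fin n)) (hu : ∀ c, ‖u c‖ ≤ R) :
    ∃ g : Fin K → Fin n → Finset.Icc (-L : ℤ) L,
      (∑ c, ‖u c - gridFamily s g c‖ ^ 2 ≤ K * n * s ^ 2) ∧
      ∀ c, ‖gridFamily s g c‖ ≤ ‖u c‖ := by
  have hround : ∀ c i, ∃ z : Finset.Icc (-L : ℤ) L,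
      |u c i - s * (z : ℤ)| ≤ s ∧ |s * (z : ℤ)| ≤ |u c i| := fun c i => by
    obtain ⟨z, hz, h⟩ := exists_int_round (a := u c i) (L := L) hs
      ((Nat.floor_mono (div_le_div_of_nonneg_right
        ((PiLp.norm_apply_le (u c) i).trans (hu c)) hs.le)).trans hRL)
    exact ⟨⟨z, hz⟩, h⟩
  choose g hg hg' using hround
  refine ⟨g, ?_, fun c => ?_⟩
  · calc ∑ c, ‖u c - gridFamily s g c‖ ^ 2 ≤ ∑ _c : Fin K, ∑ _i : Fin n, s ^ 2 := by
          refine Finset.sum_le_sum fun c _ => ?_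
          rw [EuclideanSpace.real_norm_sq_eq]
          refine Finset.sum_le_sum fun i _ => ?_
          exact sq_le_sq.mpr (by simpa [gridFamily, abs_of_pos hs] using hg c i)
      _ = K * n * s ^ 2 := by simp [mul_assoc]
  · refine le_of_sq_le_sq ?_ (norm_nonneg _)
    rw [EuclideanSpace.real_norm_sq_eq, EuclideanSpace.real_norm_sq_eq]
    exact Finset.sum_le_sum fun i _ => sq_le_sq.mpr (by simpa [gridFamily] using hg' c i)

end Grid

/-- The matrix `∑ c, u c (v c)ᵀ`. -/
noncomputable def sumOuter {m n K : ℕ} (u : Fin K → EuclideanSpace ℝ (Fin m))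
    (v : Fin K → EuclideanSpace ℝ (Fin n)) : Matrix (Fin m) (Fin n) ℝ :=
  Matrix.of fun i j => ∑ c, u c i * v c j

lemma toEuclideanLin_sumOuter {m n K : ℕ} (u : Fin K → EuclideanSpace ℝ (Fin m))
    (v : Fin K → EuclideanSpace ℝ (Fin n)) (x : EuclideanSpace ℝ (Fin n)) :
    Matrix.toEuclideanLin (sumOuter u v) x = ∑ c, ⟪v c, x⟫_ℝ • u c := by
  ext i
  simp only [sumOuter, Matrix.toLpLin_apply, Matrix.mulVec, dotProduct, Matrix.of_apply,
    Finset.sum_mul, PiLp.inner_apply, WithLp.ofLp_sum, Finset.sum_apply, PiLp.smul_apply,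
    smul_eq_mul]
  rw [Finset.sum_comm]
  refine Finset.sum_congr rfl fun c _ => Finset.sum_congr rfl fun j _ => ?_
  simp
  ring

/-- All products of grid families with integer coordinates bounded by `L`. -/
noncomputable def gridCover (m n K L : ℕ) (s t : ℝ) : Finset (Matrix (Fin m) (Fin n) ℝ) :=
  (Finset.univ : Finset ((Fin K → Fin m → Finset.Icc (-L : ℤ) L) ×
    (Fin K → Fin n → Finset.Icc (-L : ℤ) L))).image
      fun g => sumOuter (gridFamily s g.1) (gridFamily t g.2)

lemma card_gridCover_le (m n K L : ℕ) (s t : ℝ) :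
    (gridCover m n K L s t).card ≤ (2 * L + 1) ^ ((m + n) * K) := by
  refine Finset.card_image_le.trans_eq ?_
  have hcard : ((L : ℤ) + 1 + L).toNat = 2 * L + 1 := by omega
  simp [hcard, ← pow_mul, ← pow_add, add_mul]

lemma exists_mem_gridCover {m n K L : ℕ} {B ε d : ℝ} (hB : 0 < B) (hε : 0 < ε) (hd : 0 < d)
    (hm : (m : ℝ) ≤ d) (hn : (n : ℝ) ≤ d) (hK : K = min n ⌊9 * (B / ε) ^ 2⌋₊)
    (hL : L = ⌊3 * (B / ε) * d⌋₊) (M : Matrix (Fin m) (Fin n) ℝ) (hM : frobNorm M ≤ B) :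
    ∃ M' ∈ gridCover m n K L (ε / 3 / d) (ε / (3 * B) / d), specNorm (M - M') ≤ ε := by
  obtain ⟨v, hv1, hfv, hbessel, hres⟩ := exists_lowRank_approx (Matrix.toEuclideanLin M)
    (δ := ε / 3) (b := B) (K := K) (by positivity)
    (fun k v hv => (sum_norm_sq_toEuclideanLin_le M hv).trans (by gcongr; exact frobNorm_nonneg M))
    (by
      rw [finrank_euclideanSpace_fin, hK]
      exact le_of_eq (by congr 2; field_simp; norm_num))
  have hKd : (K : ℝ) ≤ d := le_trans (by exact_mod_cast hK ▸ min_le_left _ _) hn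
  have hu1 : ∀ c, ‖Matrix.toEuclideanLin M (v c)‖ ≤ B := fun c =>
    (norm_toEuclideanLin_le_frobNorm M (v c)).trans
      ((mul_le_of_le_one_right (frobNorm_nonneg M) (hv1 c)).trans hM)
  obtain ⟨g, hg, hg'⟩ := exists_gridFamily (L := L) (s := ε / 3 / d) (R := B) (by positivity)
    (by rw [hL]; exact le_of_eq (by congr 1; field_simp)) _ hu1
  obtain ⟨h, hh, -⟩ := exists_gridFamily (L := L) (s := ε / (3 * B) / d) (R := 1) (by positivity)
    (by rw [hL]; exact le_of_eq (by congr 1; field_simp)) v hv1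
  refine ⟨_, Finset.mem_image_of_mem _ (Finset.mem_univ (g, h)), ?_⟩
  have hgrid : ∀ {k : ℕ} (a : ℝ), (k : ℝ) ≤ d → K * k * (a / d) ^ 2 ≤ a ^ 2 := fun {k} a hk => by
    calc K * k * (a / d) ^ 2 ≤ d * d * (a / d) ^ 2 := by gcongr
      _ = a ^ 2 := by field_simp
  refine specNorm_le_of_norm_le _ hε.le fun x => ?_
  have hpert := norm_sum_inner_smul_sub_le (b := B) (η := ε / 3) (θ := ε / (3 * B)) hB.le
    (by positivity) (by positivity) hbessel
    ((Finset.sum_le_sum fun c _ => pow_le_pow_left₀ (norm_nonneg _) (hg' c) 2).trans hfv)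
    (hg.trans (hgrid _ hm)) (hh.trans (hgrid _ hn)) x
  rw [map_sub, LinearMap.sub_apply, toEuclideanLin_sumOuter]
  refine (norm_sub_le_norm_sub_add_norm_sub _ _ _).trans
    ((add_le_add (hres x) hpert).trans_eq ?_)
  field_simp
  ring

lemma log_entropy_bound {d r p k L : ℝ} (hd : 1 ≤ d) (hr : 1 ≤ r) (hp : p ≤ 2 * d) (hk0 : 0 ≤ k)
    (hkd : k ≤ d) (hkr : k ≤ 9 * r ^ 2) (hL0 : 0 ≤ L) (hL : L ≤ 3 * r * d) :
    p * k * Real.log (2 * L + 1) + 1 ≤ 36 * d * r ^ 2 * Real.log (9 * d) := by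
  have hrd : 1 ≤ r * d := one_le_mul_of_one_le_of_one_le hr hd
  have hdr2 : 1 ≤ d * r ^ 2 := one_le_mul_of_one_le_of_one_le hd (one_le_pow₀ hr)
  have hlog0 : 0 ≤ Real.log (2 * L + 1) := Real.log_nonneg (by linarith)
  have he := Real.exp_one_lt_d9
  have hp' : p * k * Real.log (2 * L + 1) ≤ 2 * d * k * Real.log (2 * L + 1) := by gcongr
  rcases le_total r d with h | h
  · have hlog : Real.log (2 * L + 1) ≤ 2 * Real.log (9 * d) - 1 := by
      rw [Real.log_le_iff_le_exp (by linarith), Real.exp_sub, le_div_iff₀ (Real.exp_pos 1),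
        mul_comm 2 (Real.log _), Real.exp_mul, Real.exp_log (by linarith), Real.rpow_two]
      have : 2 * L + 1 ≤ 7 * d ^ 2 := by nlinarith
      nlinarith [Real.exp_pos 1]
    have : 2 * d * k * Real.log (2 * L + 1) ≤
        2 * d * (9 * r ^ 2) * (2 * Real.log (9 * d) - 1) := by gcongr
    nlinarith
  · have hlog : Real.log (2 * L + 1) ≤ 8 * r := by
      have h7 : 2 * L + 1 ≤ 7 * r ^ 2 := by nlinarith
      calc Real.log (2 * L + 1) ≤ Real.log (7 * r ^ 2) := Real.log_le_log (by linarith) h7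
        _ = Real.log 7 + 2 * Real.log r := by
            rw [Real.log_mul (by norm_num) (by positivity), Real.log_pow]
            norm_num
        _ ≤ 8 * r := by
            have := Real.log_le_sub_one_of_pos (show (0 : ℝ) < 7 by norm_num)
            have := Real.log_le_sub_one_of_pos (show 0 < r by linarith)
            linarith
    have hlog9 : 1 ≤ Real.log (9 * d) := by
      rw [Real.le_log_iff_exp_le (by linarith)]
      linarith
    have h1 : 2 * d * k * Real.log (2 * L + 1) ≤ 2 * d * r * (8 * r) := by
      gcongr
      exact hkd.trans h
    have h2 : 36 * d * r ^ 2 * 1 ≤ 36 * d * r ^ 2 * Real.log (9 * d) := by gcongr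
    nlinarith

/-- For every `ε > 0`, the Frobenius ball of radius `B` in `d₁×d₂` matrices has an
`ε`-cover in spectral norm with log-cardinality at most `⌊36 d B² log(9d)/ε²⌋`,
where `d = max{d₁, d₂}`. -/
theorem frobeniusBall_spectralCover (d₁ d₂ : ℕ) (B ε : ℝ) (hB : 0 < B) (hε : 0 < ε) :
    ∃ T : Finset (Matrix (Fin d₁) (Fin d₂) ℝ),
      (∀ M : Matrix (Fin d₁) (Fin d₂) ℝ, frobNorm M ≤ B →
        ∃ M' ∈ T, specNorm (M - M') ≤ ε) ∧
      Real.log T.card ≤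
        (Nat.floor (36 * (max d₁ d₂ : ℝ) * B ^ 2 * Real.log (9 * (max d₁ d₂ : ℝ)) / ε ^ 2) : ℝ) := by
  by_cases htriv : ∀ M : Matrix (Fin d₁) (Fin d₂) ℝ, frobNorm M ≤ B → frobNorm M ≤ ε
  · refine ⟨{0}, fun M hM => ⟨0, Finset.mem_singleton_self 0, ?_⟩, by simp⟩
    rw [sub_zero]
    exact specNorm_le_of_norm_le M hε.le fun x =>
      (norm_toEuclideanLin_le_frobNorm M x).trans (by gcongr; exact htriv M hM)
  push Not at htriv
  obtain ⟨M₀, hM₀B, hM₀ε⟩ := htriv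
  have hr : 1 ≤ B / ε := (one_le_div hε).mpr (hM₀ε.le.trans hM₀B)
  have hd : 1 ≤ (max d₁ d₂ : ℝ) := by
    rw [le_max_iff, Nat.one_le_cast, Nat.one_le_cast]
    by_contra! hlt
    obtain ⟨rfl, rfl⟩ : d₁ = 0 ∧ d₂ = 0 := by omega
    simp [frobNorm] at hM₀ε
    linarith
  have hd0 : 0 < (max d₁ d₂ : ℝ) := by linarith
  refine ⟨_, exists_mem_gridCover hB hε hd0 (le_max_left _ _) (le_max_right _ _) rfl rfl, ?_⟩
  set K := min d₂ ⌊9 * (B / ε) ^ 2⌋₊ with hK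
  set L := ⌊3 * (B / ε) * (max d₁ d₂ : ℝ)⌋₊ with hL
  have hlog : Real.log (gridCover d₁ d₂ K L (ε / 3 / (max d₁ d₂ : ℝ))
      (ε / (3 * B) / (max d₁ d₂ : ℝ))).card ≤ (d₁ + d₂) * K * Real.log (2 * L + 1) := by
    rcases Nat.eq_zero_or_pos (gridCover d₁ d₂ K L (ε / 3 / (max d₁ d₂ : ℝ))
      (ε / (3 * B) / (max d₁ d₂ : ℝ))).card with h0 | hpos
    · rw [h0, Nat.cast_zero, Real.log_zero]
      have := Real.log_nonneg (show (1 : ℝ) ≤ 2 * L + 1 by simp)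
      positivity
    · refine (Real.log_le_log (by exact_mod_cast hpos)
        (Nat.cast_le.mpr (card_gridCover_le _ _ _ _ _ _))).trans_eq ?_
      push_cast
      rw [Real.log_pow]
      push_cast
      ring
  have hbound := log_entropy_bound (p := d₁ + d₂) (k := K) (L := L) hd hr
    (by linarith [le_max_left (d₁ : ℝ) d₂, le_max_right (d₁ : ℝ) d₂]) (by positivity)
    (le_trans (by exact_mod_cast min_le_left _ _) (le_max_right (d₁ : ℝ) d₂))
    (le_trans (by exact_mod_cast min_le_right _ _) (Nat.floor_le (by positivity)))
    (by positivity) (Nat.floor_le (by positivity))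
  have hrw : 36 * (max d₁ d₂ : ℝ) * B ^ 2 * Real.log (9 * (max d₁ d₂ : ℝ)) / ε ^ 2 =
      36 * (max d₁ d₂ : ℝ) * (B / ε) ^ 2 * Real.log (9 * (max d₁ d₂ : ℝ)) := by
    rw [div_pow]
    ring
  rw [hrw]
  linarith [Nat.lt_floor_add_one
    (36 * (max d₁ d₂ : ℝ) * (B / ε) ^ 2 * Real.log (9 * (max d₁ d₂ : ℝ)))]
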